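/- Let H be Hermitian on ℂ^{d}⊗ℂ^{d}⊗ℂ^{d} and U Haar-random on systems 2,3. Then E_U[tr((tr₃(U₂₃ H U₂₃†))²)] = d/(d²+1)·(tr(H²) + tr(H₁²)) ≥ d/(d²+1)·tr(H²), where H₁ = tr₂₃ H. -/

import Mathlib

open MeasureTheory
open scoped Matrix Kronecker BigOperators

noncomputable instance (d : ℕ) :
    MeasurableSpace (Matrix (Fin d × Fin d) (Fin d × Fin d) ℂ) :=
  inferInstanceAs (MeasurableSpace (Fin d × Fin d → Fin d × Fin d → ℂ))

/-- Partial trace over the third tensor factor. -/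
noncomputable def ptrace3 {d : ℕ} (C : Matrix (Fin d × Fin d × Fin d) (Fin d × Fin d × Fin d) ℂ) :
    Matrix (Fin d × Fin d) (Fin d × Fin d) ℂ :=
  Matrix.of fun a b => ∑ k : Fin d, C (a.1, a.2, k) (b.1, b.2, k)

/-- Partial trace over systems 2 and 3. -/
noncomputable def ptrace23 {d : ℕ} (C : Matrix (Fin d × Fin d × Fin d) (Fin d × Fin d × Fin d) ℂ) :
    Matrix (Fin d) (Fin d) ℂ :=
  Matrix.of fun a b => ∑ p : Fin d × Fin d, C (a, p) (b, p)

/-!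
Contracting `H ⊗ H` with the swap of the two copies of system 1 gives an operator `X` on two copies
of systems 2 and 3, and the trace to be averaged is `tr (F₂ (U ⊗ U) X (U ⊗ U)ᴴ)` with `F₂` the swap
of the two copies of system 2. By invariance the average `T` of `(U ⊗ U) X (U ⊗ U)ᴴ` commutes with
every `V ⊗ V`, so it is a combination of `1` and the full swap `F`, and `tr (F₂ T)` is determined by
`tr T = tr X = tr (H₁²)` and `tr (F T) = tr (F X) = tr (H²)`.

To identify the commutant of the operators `V ⊗ V` without differentiating: for a projection `P` and
`z = i, -1` the matrix `1 + (z - 1) P` is unitary, and a combination of the two resulting `V ⊗ V` is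
`P ⊗ 1 + 1 ⊗ P` up to a scalar matrix. As projections span, `T` commutes with every
`X ⊗ 1 + 1 ⊗ X`.
-/

/-- The Kronecker sum `X ⊗ 1 + 1 ⊗ X`, the generator of the one-parameter group
`exp (tX) ⊗ exp (tX)`, as a linear map in `X`. -/
def kroneckerSum {n R : Type*} [DecidableEq n] [CommSemiring R] :
    Matrix n n R →ₗ[R] Matrix (n × n) (n × n) R where
  toFun X := X ⊗ₖ 1 + 1 ⊗ₖ X
  map_add' X Y := by
    simp only [Matrix.add_kronecker, Matrix.kronecker_add, add_add_add_comm]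
  map_smul' c X := by
    simp only [Matrix.smul_kronecker, Matrix.kronecker_smul, smul_add, RingHom.id_apply]

/-- The swap operator `e i ⊗ e j ↦ e j ⊗ e i` on two copies of `R ^ n`. -/
def swapMatrix (n R : Type*) [DecidableEq n] [Zero R] [One R] : Matrix (n × n) (n × n) R :=
  Equiv.Perm.permMatrix R (Equiv.prodComm n n)

theorem swapMatrix_apply {n R : Type*} [DecidableEq n] [Zero R] [One R] (p q : n × n) :
    swapMatrix n R p q = if p.swap = q then 1 else 0 := by
  simp [swapMatrix, PEquiv.toMatrix_apply]

theorem swapMatrix_mul_apply {m n R : Type*} [Fintype n] [DecidableEq n] [NonAssocSemiring R]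
    (M : Matrix (n × n) m R) (p : n × n) (q : m) : (swapMatrix n R * M) p q = M p.swap q := by
  simp [swapMatrix, PEquiv.toMatrix_toPEquiv_mul]

theorem swapMatrix_mul_self {n R : Type*} [Fintype n] [DecidableEq n] [NonAssocSemiring R] :
    swapMatrix n R * swapMatrix n R = 1 := by
  ext p q
  simp [swapMatrix_mul_apply, swapMatrix_apply, Matrix.one_apply]

section Commutant

variable {n R : Type*} [Fintype n] [DecidableEq n] [CommRing R] {T : Matrix (n × n) (n × n) R}

theorem apply_of_commute_kroneckerSum_single {a b : n}
    (hT : Commute T (kroneckerSum (Matrix.single a b 1))) (i j k l : n) :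
    (if b = k then T (i, j) (a, l) else 0) + (if b = l then T (i, j) (k, a) else 0) =
      (if a = i then T (b, j) (k, l) else 0) + (if a = j then T (i, b) (k, l) else 0) := by
  have h := congr_fun₂ hT.eq (i, j) (k, l)
  simpa [kroneckerSum, mul_add, add_mul, Matrix.mul_apply, Fintype.sum_prod_type,
    Matrix.single_apply, Matrix.one_apply, ite_and, eq_comm, Finset.sum_add_distrib] using h

theorem exists_sum_apply_eq_ite
    (hT : ∀ a b, Commute T (kroneckerSum (Matrix.single a b 1))) :
    ∃ s t : R, (∀ j l, ∑ b, T (b, j) (b, l) = if j = l then s else 0) ∧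
      ∀ i k, ∑ b, T (i, b) (b, k) = if i = k then t else 0 := by
  cases isEmpty_or_nonempty n with
  | inl _ => exact ⟨0, 0, isEmptyElim, isEmptyElim⟩
  | inr h =>
  obtain ⟨c⟩ := h
  refine ⟨∑ b, T (b, c) (b, c), ∑ b, T (c, b) (b, c), fun j l ↦ ?_, fun i k ↦ ?_⟩
  · have h := Fintype.sum_congr _ _ fun x ↦
      apply_of_commute_kroneckerSum_single (hT l c) x j x c
    simpa [Finset.sum_add_distrib, eq_comm] using h
  · have h := Fintype.sum_congr _ _ fun x ↦
      apply_of_commute_kroneckerSum_single (hT k c) i x x c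
    simpa [Finset.sum_add_distrib, eq_comm, add_comm] using h

theorem card_mul_apply_add_apply_swap
    (hT : ∀ a b, Commute T (kroneckerSum (Matrix.single a b 1))) (i j k l : n) :
    Fintype.card n * T (i, j) (k, l) + T (i, j) (l, k) =
      (if k = i then ∑ b, T (b, j) (b, l) else 0) + if k = j then ∑ b, T (i, b) (b, l) else 0 := by
  have h := Fintype.sum_congr _ _ fun b ↦
    apply_of_commute_kroneckerSum_single (hT k b) i j b l
  simpa [Finset.sum_add_distrib, Finset.sum_ite_irrel] using h

/-- With `F` the swap, summing the relations `[T, Eₐᵦ ⊗ 1 + 1 ⊗ Eₐᵦ] = 0` over one index gives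
`n T + T F = s + t F`; multiplying by `F` gives a second such relation, and the two determine `T`
unless `n = 1`. -/
theorem exists_eq_smul_one_add_smul_swapMatrix {K : Type*} [Field K] [CharZero K]
    {T : Matrix (n × n) (n × n) K}
    (hT : ∀ a b, Commute T (kroneckerSum (Matrix.single a b 1))) :
    ∃ q r : K, T = q • 1 + r • swapMatrix n K := by
  cases subsingleton_or_nontrivial n with
  | inl _ =>
    cases isEmpty_or_nonempty n with
    | inl _ => exact ⟨0, 0, Subsingleton.elim _ _⟩
    | inr h =>
      obtain ⟨c⟩ := h
      refine ⟨T (c, c) (c, c), 0, ?_⟩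
      ext p q
      simp [Subsingleton.elim p (c, c), Subsingleton.elim q (c, c)]
  | inr _ =>
    obtain ⟨s, t, hs, ht⟩ := exists_sum_apply_eq_ite hT
    have hN : (Fintype.card n : K) ^ 2 - 1 ≠ 0 := by
      rw [sub_ne_zero]
      exact_mod_cast (one_lt_pow₀ (Fintype.one_lt_card (α := n)) two_ne_zero).ne'
    set N := (Fintype.card n : K)
    refine ⟨(N * s - t) / (N ^ 2 - 1), (N * t - s) / (N ^ 2 - 1), ?_⟩
    ext ⟨i, j⟩ ⟨k, l⟩
    have h₁ := card_mul_apply_add_apply_swap hT i j k l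
    have h₂ := card_mul_apply_add_apply_swap hT i j l k
    rw [hs, ht] at h₁ h₂
    simp only [Matrix.add_apply, Matrix.smul_apply, Matrix.one_apply, swapMatrix_apply, smul_eq_mul,
      Prod.swap_prod_mk, Prod.mk.injEq, div_mul_eq_mul_div, ← add_div, eq_div_iff hN]
    simp only [ite_and, eq_comm (a := k), eq_comm (a := l)] at h₁ h₂ ⊢
    split_ifs at * <;> linear_combination N * h₁ - h₂

end Commutant

section UnitaryCommutant

theorem one_add_smul_mem_unitary_of_isStarProjection {𝕜 R : Type*} [CommRing 𝕜] [StarRing 𝕜]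
    [Ring R] [StarRing R] [Algebra 𝕜 R] [StarModule 𝕜 R] {P : R} (hP : IsStarProjection P) {z : 𝕜}
    (hz : z ∈ unitary 𝕜) :
    1 + (z - 1) • P ∈ unitary R := by
  have h₁ : star z * z = 1 := Unitary.star_mul_self_of_mem hz
  have h₂ : z * star z = 1 := Unitary.mul_star_self_of_mem hz
  simp only [Unitary.mem_iff, star_add, star_one, star_smul, hP.isSelfAdjoint.star_eq, star_sub,
    add_mul, mul_add, one_mul, mul_one, smul_mul_smul_comm, hP.isIdempotentElem.eq]
  constructor
  · linear_combination (norm := module) h₁ • P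
  · linear_combination (norm := module) h₂ • P

theorem span_isStarProjection {n : Type*} [Fintype n] :
    Submodule.span ℂ {P : Matrix n n ℂ | IsStarProjection P} = ⊤ := by
  classical
  have mem_of_isHermitian {X : Matrix n n ℂ} (hX : X.IsHermitian) :
      X ∈ Submodule.span ℂ {P : Matrix n n ℂ | IsStarProjection P} := by
    have hdiag : Matrix.diagonal (RCLike.ofReal ∘ hX.eigenvalues) =
        ∑ i, (hX.eigenvalues i : ℂ) • Matrix.single i i (1 : ℂ) := by
      ext i j
      simp [Matrix.diagonal_apply, Matrix.sum_apply, Matrix.single_apply, ite_and]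
    rw [hX.spectral_theorem, hdiag, map_sum]
    refine Submodule.sum_mem _ fun i _ ↦ ?_
    rw [map_smul]
    refine Submodule.smul_mem _ _ (Submodule.subset_span ?_)
    have : IsStarProjection (Matrix.single i i (1 : ℂ)) := ⟨by simp [IsIdempotentElem],
      by simp [IsSelfAdjoint, Matrix.star_eq_conjTranspose]⟩
    exact this.map _
  refine eq_top_iff.2 fun X _ ↦ ?_
  rw [← realPart_add_I_smul_imaginaryPart X]
  exact add_mem (mem_of_isHermitian (realPart X).2)
    (Submodule.smul_mem _ _ (mem_of_isHermitian (imaginaryPart X).2))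

variable {n : Type*} [Fintype n] [DecidableEq n]

theorem commute_kroneckerSum_of_isStarProjection {T : Matrix (n × n) (n × n) ℂ}
    (hT : ∀ U ∈ Matrix.unitaryGroup n ℂ, Commute T (U ⊗ₖ U)) {P : Matrix n n ℂ}
    (hP : IsStarProjection P) : Commute T (kroneckerSum P) := by
  have kroneckerSum_eq : kroneckerSum P = (1 + Complex.I / 2) • 1 -
    (1 + (Complex.I - 1) • P) ⊗ₖ (1 + (Complex.I - 1) • P) -
    (Complex.I / 2) • ((1 + (-1 - 1 : ℂ) • P) ⊗ₖ (1 + (-1 - 1 : ℂ) • P)) := by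
    simp only [kroneckerSum, LinearMap.coe_mk, AddHom.coe_mk, Matrix.add_kronecker,
      Matrix.kronecker_add, Matrix.smul_kronecker, Matrix.kronecker_smul, Matrix.one_kronecker_one]
    linear_combination (norm := module) Complex.I_sq • (P ⊗ₖ P)
  rw [kroneckerSum_eq]
  refine (((Commute.one_right T).smul_right _).sub_right (hT _ ?_)).sub_right
    ((hT _ ?_).smul_right _)
  · exact one_add_smul_mem_unitary_of_isStarProjection hP (by simp [Unitary.mem_iff])
  · exact one_add_smul_mem_unitary_of_isStarProjection hP (by simp [Unitary.mem_iff])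

theorem commute_kroneckerSum {T : Matrix (n × n) (n × n) ℂ}
    (hT : ∀ U ∈ Matrix.unitaryGroup n ℂ, Commute T (U ⊗ₖ U)) (X : Matrix n n ℂ) :
    Commute T (kroneckerSum X) := by
  have hX : X ∈ Submodule.span ℂ {P : Matrix n n ℂ | IsStarProjection P} := by
    rw [span_isStarProjection]
    exact Submodule.mem_top
  induction hX using Submodule.span_induction with
  | mem P hP => exact commute_kroneckerSum_of_isStarProjection hT hP
  | zero => rw [map_zero]; exact Commute.zero_right T
  | add X Y _ _ hX hY => rw [map_add]; exact hX.add_right hY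
  | smul c X _ hX => rw [map_smul]; exact hX.smul_right c

theorem exists_eq_smul_one_add_smul_swapMatrix_of_commute_unitary {T : Matrix (n × n) (n × n) ℂ}
    (hT : ∀ U ∈ Matrix.unitaryGroup n ℂ, Commute T (U ⊗ₖ U)) :
    ∃ q r : ℂ, T = q • 1 + r • swapMatrix n ℂ :=
  exists_eq_smul_one_add_smul_swapMatrix fun _ _ ↦ commute_kroneckerSum hT _

end UnitaryCommutant

section Traces

variable {l m n α β R : Type*}

/-- The partial trace `Tr_n : End (R ^ m ⊗ R ^ n) → End (R ^ m)`. -/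
def partialTraceRight [Fintype n] [AddCommMonoid R] (M : Matrix (m × n) (m × n) R) :
    Matrix m m R :=
  Matrix.of fun i j ↦ ∑ k, M (i, k) (j, k)

/-- The partial trace over the last of three tensor factors. -/
def partialTraceThird [Fintype n] [AddCommMonoid R] (M : Matrix (l × m × n) (l × m × n) R) :
    Matrix (l × m) (l × m) R :=
  partialTraceRight (M.submatrix (Equiv.prodAssoc l m n) (Equiv.prodAssoc l m n))

theorem isHermitian_partialTraceRight [Fintype n] [AddCommMonoid R] [StarAddMonoid R]
    {M : Matrix (m × n) (m × n) R} (hM : M.IsHermitian) : (partialTraceRight M).IsHermitian :=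
  Matrix.IsHermitian.ext fun i j ↦ by
    simp only [partialTraceRight, Matrix.of_apply, star_sum, hM.apply]

/-- The operator swapping the two copies of `R ^ α` in `(R ^ α ⊗ R ^ β) ⊗ (R ^ α ⊗ R ^ β)`. -/
def swapFstMatrix (α β R : Type*) [DecidableEq α] [DecidableEq β] [NonAssocSemiring R] :
    Matrix ((α × β) × (α × β)) ((α × β) × (α × β)) R :=
  (swapMatrix α R ⊗ₖ (1 : Matrix (β × β) (β × β) R)).submatrix
    (Equiv.prodProdProdComm α β α β) (Equiv.prodProdProdComm α β α β)

theorem trace_submatrix_equiv [Fintype m] [Fintype n] [AddCommMonoid R] (e : m ≃ n)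
    (M : Matrix n n R) : (M.submatrix e e).trace = M.trace :=
  Equiv.sum_comp e M.diag

theorem swapMatrix_prod [DecidableEq α] [DecidableEq β] [NonAssocSemiring R] :
    swapMatrix (α × β) R = (swapMatrix α R ⊗ₖ swapMatrix β R).submatrix
      (Equiv.prodProdProdComm α β α β) (Equiv.prodProdProdComm α β α β) := by
  ext ⟨⟨x, u⟩, y, v⟩ ⟨⟨x', u'⟩, y', v'⟩
  simp [swapMatrix_apply, ← ite_and, and_comm, and_left_comm, and_assoc]

theorem swapFstMatrix_mul_apply [Fintype α] [DecidableEq α] [Fintype β] [DecidableEq β]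
    [NonAssocSemiring R] (M : Matrix ((α × β) × (α × β)) m R) (x y : α)
    (u v : β) (q : m) :
    (swapFstMatrix α β R * M) ((x, u), y, v) q = M ((y, u), x, v) q := by
  simp [swapFstMatrix, Matrix.mul_apply, Fintype.sum_prod_type, swapMatrix_apply,
    Matrix.one_apply, ite_and]

variable [CommSemiring R]

section Swap

variable [Fintype n] [DecidableEq n]

theorem commute_swapMatrix_kronecker_self (A : Matrix n n R) :
    Commute (swapMatrix n R) (A ⊗ₖ A) := by
  ext ⟨i, j⟩ ⟨k, l⟩
  rw [swapMatrix_mul_apply]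
  simp [Matrix.mul_apply, swapMatrix_apply, Fintype.sum_prod_type, ite_and, mul_comm]

theorem trace_swapMatrix_mul_kronecker (A B : Matrix n n R) :
    (swapMatrix n R * A ⊗ₖ B).trace = (A * B).trace := by
  simp only [Matrix.trace, Matrix.diag_apply, swapMatrix_mul_apply, Matrix.kronecker_apply,
    Fintype.sum_prod_type, Prod.swap_prod_mk]
  simp only [Matrix.mul_apply]
  exact Finset.sum_comm

theorem trace_swapMatrix : (swapMatrix n R).trace = Fintype.card n := by
  simpa using trace_swapMatrix_mul_kronecker (1 : Matrix n n R) 1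

end Swap

variable [Fintype α] [DecidableEq α] [Fintype β] [DecidableEq β]

theorem trace_swapFstMatrix :
    (swapFstMatrix α β R).trace = Fintype.card α * (Fintype.card β : R) ^ 2 := by
  rw [swapFstMatrix, trace_submatrix_equiv, Matrix.trace_kronecker, trace_swapMatrix,
    Matrix.trace_one, Fintype.card_prod, Nat.cast_mul, sq]

theorem trace_swapFstMatrix_mul_swapMatrix :
    (swapFstMatrix α β R * swapMatrix (α × β) R).trace =
      (Fintype.card α : R) ^ 2 * Fintype.card β := by
  rw [swapFstMatrix, swapMatrix_prod, Matrix.submatrix_mul_equiv,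
    trace_submatrix_equiv, ← Matrix.mul_kronecker_mul, swapMatrix_mul_self, one_mul,
    Matrix.trace_kronecker, trace_swapMatrix, Matrix.trace_one, Fintype.card_prod, Nat.cast_mul, sq]

theorem trace_swapFstMatrix_mul_kronecker (A B : Matrix (α × β) (α × β) R) :
    (swapFstMatrix α β R * A ⊗ₖ B).trace =
      (partialTraceRight A * partialTraceRight B).trace := by
  simp only [Matrix.trace, Matrix.diag_apply, Fintype.sum_prod_type, swapFstMatrix_mul_apply,
    Matrix.kronecker_apply]
  simp only [Matrix.mul_apply, partialTraceRight, Matrix.of_apply, Finset.sum_mul_sum]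
  exact (Fintype.sum_congr _ _ fun _ ↦ Finset.sum_comm).trans Finset.sum_comm

theorem trace_swapFstMatrix_mul_of_eq_smul_one_add_smul_swapMatrix {K : Type*} [Field K]
    [CharZero K] {T : Matrix ((α × α) × (α × α)) ((α × α) × (α × α)) K} {q r : K}
    (hT : T = q • 1 + r • swapMatrix (α × α) K) :
    (swapFstMatrix α α K * T).trace = Fintype.card α / ((Fintype.card α : K) ^ 2 + 1) *
      ((swapMatrix (α × α) K * T).trace + T.trace) := by
  have hd : (Fintype.card α : K) ^ 2 + 1 ≠ 0 := by
    exact_mod_cast Nat.succ_ne_zero (Fintype.card α ^ 2)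
  simp only [hT, mul_add, Matrix.mul_smul, Matrix.mul_one, Matrix.trace_add, Matrix.trace_smul,
    trace_swapFstMatrix, trace_swapFstMatrix_mul_swapMatrix, swapMatrix_mul_self, trace_swapMatrix,
    Matrix.trace_one, Fintype.card_prod, Nat.cast_mul, smul_eq_mul]
  field_simp
  ring

end Traces

section Contraction

variable {ι n α β R : Type*} [Fintype ι] [Fintype n] [CommSemiring R]

/-- For `H` on `R ^ ι ⊗ R ^ n`, the contraction of `H ⊗ H` against the swap of the two copies of
`R ^ ι`, as an operator on `R ^ n ⊗ R ^ n`. The matrix `(Matrix.comp ι ι n n R).symm H a b` is the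
`(a, b)` block of `H`. -/
def swapContraction (H : Matrix (ι × n) (ι × n) R) : Matrix (n × n) (n × n) R :=
  ∑ a, ∑ b, (Matrix.comp ι ι n n R).symm H a b ⊗ₖ (Matrix.comp ι ι n n R).symm H b a

theorem trace_mul_swapContraction (B : Matrix (n × n) (n × n) R) (H : Matrix (ι × n) (ι × n) R) :
    (B * swapContraction H).trace = ∑ a, ∑ b,
      (B * (Matrix.comp ι ι n n R).symm H a b ⊗ₖ (Matrix.comp ι ι n n R).symm H b a).trace := by
  simp only [swapContraction, Matrix.mul_sum, Matrix.trace_sum]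

theorem trace_swapContraction (H : Matrix (ι × n) (ι × n) R) :
    (swapContraction H).trace = (partialTraceRight H * partialTraceRight H).trace := by
  simp only [swapContraction, Matrix.trace_sum, Matrix.trace_kronecker]
  rfl

theorem trace_swapMatrix_mul_swapContraction [DecidableEq n] (H : Matrix (ι × n) (ι × n) R) :
    (swapMatrix n R * swapContraction H).trace = (H * H).trace := by
  simp only [trace_mul_swapContraction, trace_swapMatrix_mul_kronecker]
  simp only [Matrix.trace, Matrix.diag_apply, Matrix.mul_apply, Fintype.sum_prod_type]
  exact Fintype.sum_congr _ _ fun a ↦ Finset.sum_comm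

theorem trace_swapFstMatrix_mul_swapContraction [Fintype α] [DecidableEq α] [Fintype β]
    [DecidableEq β] (H : Matrix (ι × α × β) (ι × α × β) R) :
    (swapFstMatrix α β R * swapContraction H).trace =
      (partialTraceThird H * partialTraceThird H).trace := by
  simp only [trace_mul_swapContraction, trace_swapFstMatrix_mul_kronecker]
  simp only [Matrix.trace, Matrix.diag_apply, Matrix.mul_apply, Fintype.sum_prod_type]
  exact Fintype.sum_congr _ _ fun a ↦ Finset.sum_comm

variable [StarRing R] [DecidableEq ι]

theorem comp_symm_one_kronecker_conj (U : Matrix n n R) (H : Matrix (ι × n) (ι × n) R) (a b : ι) :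
    (Matrix.comp ι ι n n R).symm
        (((1 : Matrix ι ι R) ⊗ₖ U) * H * ((1 : Matrix ι ι R) ⊗ₖ U)ᴴ) a b =
      U * (Matrix.comp ι ι n n R).symm H a b * Uᴴ := by
  have one_kronecker (V : Matrix n n R) :
      (Matrix.compRingEquiv ι n R).symm ((1 : Matrix ι ι R) ⊗ₖ V) =
        Matrix.diagonal fun _ ↦ V := by
    ext a b i j
    rw [Matrix.compRingEquiv_symm_apply, Matrix.comp_symm_apply]
    obtain rfl | hab := eq_or_ne a b <;> simp [*]
  simp only [Matrix.conjTranspose_kronecker, Matrix.conjTranspose_one,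
    ← Matrix.compRingEquiv_symm_apply, map_mul, one_kronecker, Matrix.mul_diagonal,
    Matrix.diagonal_mul]

theorem swapContraction_one_kronecker_conj (U : Matrix n n R) (H : Matrix (ι × n) (ι × n) R) :
    swapContraction (((1 : Matrix ι ι R) ⊗ₖ U) * H * ((1 : Matrix ι ι R) ⊗ₖ U)ᴴ) =
      U ⊗ₖ U * swapContraction H * (U ⊗ₖ U)ᴴ := by
  simp only [swapContraction, comp_symm_one_kronecker_conj]
  simp only [Matrix.mul_kronecker_mul, Matrix.mul_sum, Matrix.sum_mul,
    Matrix.conjTranspose_kronecker]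

theorem trace_partialTraceThird_conj_mul_self [Fintype α] [DecidableEq α] [Fintype β]
    [DecidableEq β] (U : Matrix (α × β) (α × β) R) (H : Matrix (ι × α × β) (ι × α × β) R) :
    (partialTraceThird ((1 : Matrix ι ι R) ⊗ₖ U * H * ((1 : Matrix ι ι R) ⊗ₖ U)ᴴ) *
        partialTraceThird ((1 : Matrix ι ι R) ⊗ₖ U * H * ((1 : Matrix ι ι R) ⊗ₖ U)ᴴ)).trace =
      (swapFstMatrix α β R * (U ⊗ₖ U * swapContraction H * (U ⊗ₖ U)ᴴ)).trace := by
  rw [← trace_swapFstMatrix_mul_swapContraction, swapContraction_one_kronecker_conj]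

end Contraction

section UnitaryGroup

variable {n 𝕜 : Type*} [RCLike 𝕜] [Fintype n] [DecidableEq n]

instance compactSpace_unitaryGroup : CompactSpace (Matrix.unitaryGroup n 𝕜) := by
  refine isCompact_iff_compactSpace.1 ?_
  have hbox : IsCompact (Set.univ.pi fun _ : n ↦ Set.univ.pi fun _ : n ↦
      Metric.closedBall (0 : 𝕜) 1) :=
    isCompact_univ_pi fun _ ↦ isCompact_univ_pi fun _ ↦ isCompact_closedBall 0 1
  refine hbox.of_isClosed_subset (isClosed_unitary (R := Matrix n n 𝕜)) fun U hU i _ j _ ↦ ?_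
  simpa using entry_norm_bound_of_unitary hU i j

theorem continuous_kronecker_self_conj (X : Matrix (n × n) (n × n) 𝕜) :
    Continuous fun U : Matrix.unitaryGroup n 𝕜 ↦
      U.1 ⊗ₖ U.1 * X * (U.1 ⊗ₖ U.1)ᴴ := by
  have hcont : Continuous fun U : Matrix.unitaryGroup n 𝕜 ↦ U.1 ⊗ₖ U.1 :=
    continuous_matrix fun p q ↦ (continuous_subtype_val.matrix_elem p.1 q.1).mul
      (continuous_subtype_val.matrix_elem p.2 q.2)
  fun_prop

variable [MeasurableSpace (Matrix.unitaryGroup n 𝕜)] [BorelSpace (Matrix.unitaryGroup n 𝕜)]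
  (μ : Measure (Matrix.unitaryGroup n 𝕜))

theorem integrable_of_continuous_unitaryGroup [IsFiniteMeasure μ] {E : Type*}
    [NormedAddCommGroup E] {f : Matrix.unitaryGroup n 𝕜 → E} (hf : Continuous f) :
    Integrable f μ :=
  hf.integrable_of_hasCompactSupport (.of_compactSpace f)

end UnitaryGroup

section Twirl

open scoped Matrix.Norms.Frobenius

variable {n : Type*} [Fintype n] [DecidableEq n] [MeasurableSpace (Matrix.unitaryGroup n ℂ)]
  [BorelSpace (Matrix.unitaryGroup n ℂ)] (μ : Measure (Matrix.unitaryGroup n ℂ))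

/-- The second-moment twirl `E_U[(U ⊗ U) X (U ⊗ U)ᴴ]` of an operator `X` on `ℂ ^ n ⊗ ℂ ^ n`,
for `U` distributed according to `μ`. -/
noncomputable def secondMomentTwirl (X : Matrix (n × n) (n × n) ℂ) : Matrix (n × n) (n × n) ℂ :=
  ∫ U : Matrix.unitaryGroup n ℂ, U.1 ⊗ₖ U.1 * X * (U.1 ⊗ₖ U.1)ᴴ ∂μ

theorem commute_secondMomentTwirl [IsFiniteMeasure μ] [μ.IsMulLeftInvariant]
    (X : Matrix (n × n) (n × n) ℂ) {V : Matrix n n ℂ} (hV : V ∈ Matrix.unitaryGroup n ℂ) :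
    Commute (secondMomentTwirl μ X) (V ⊗ₖ V) := by
  have hint := integrable_of_continuous_unitaryGroup μ (continuous_kronecker_self_conj X)
  have hVV : (V ⊗ₖ V)ᴴ * V ⊗ₖ V = 1 :=
    Unitary.star_mul_self_of_mem (Matrix.kronecker_mem_unitary hV hV)
  have hconj : V ⊗ₖ V * secondMomentTwirl μ X * (V ⊗ₖ V)ᴴ = secondMomentTwirl μ X := by
    rw [secondMomentTwirl, ← integral_const_mul_of_integrable hint,
      ← integral_mul_const_of_integrable (hint.const_mul _)]
    refine Eq.trans ?_ (integral_mul_left_eq_self _ (⟨V, hV⟩ : Matrix.unitaryGroup n ℂ))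
    simp only [Submonoid.coe_mul, Matrix.mul_kronecker_mul, Matrix.conjTranspose_mul, mul_assoc]
  calc secondMomentTwirl μ X * V ⊗ₖ V
      = V ⊗ₖ V * secondMomentTwirl μ X * ((V ⊗ₖ V)ᴴ * V ⊗ₖ V) := by rw [← mul_assoc, hconj]
    _ = V ⊗ₖ V * secondMomentTwirl μ X := by rw [hVV, mul_one]

theorem trace_mul_secondMomentTwirl [IsFiniteMeasure μ] (B X : Matrix (n × n) (n × n) ℂ) :
    (B * secondMomentTwirl μ X).trace = ∫ U : Matrix.unitaryGroup n ℂ,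
      (B * (U.1 ⊗ₖ U.1 * X * (U.1 ⊗ₖ U.1)ᴴ)).trace ∂μ :=
  ((LinearMap.toContinuousLinearMap
    (Matrix.traceLinearMap (n × n) ℂ ℂ ∘ₗ LinearMap.mulLeft ℂ B)).integral_comp_comm
      (integrable_of_continuous_unitaryGroup μ (continuous_kronecker_self_conj X))).symm

theorem trace_mul_secondMomentTwirl_of_commute [IsProbabilityMeasure μ]
    (X : Matrix (n × n) (n × n) ℂ) {B : Matrix (n × n) (n × n) ℂ}
    (hB : ∀ U ∈ Matrix.unitaryGroup n ℂ, Commute B (U ⊗ₖ U)) :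
    (B * secondMomentTwirl μ X).trace = (B * X).trace := by
  have trace_conj (U : Matrix.unitaryGroup n ℂ) :
      (B * (U.1 ⊗ₖ U.1 * X * (U.1 ⊗ₖ U.1)ᴴ)).trace = (B * X).trace := by
    have hUU : (U.1 ⊗ₖ U.1)ᴴ * U.1 ⊗ₖ U.1 = 1 :=
      Unitary.star_mul_self_of_mem (Matrix.kronecker_mem_unitary U.2 U.2)
    rw [← mul_assoc, ← mul_assoc, (hB U U.2).eq, mul_assoc _ B X, Matrix.trace_mul_comm,
      ← mul_assoc, hUU, one_mul]
  simp only [trace_mul_secondMomentTwirl, trace_conj, integral_const, probReal_univ, one_smul]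

end Twirl

section Average

open scoped ComplexOrder in
theorem re_trace_mul_self_nonneg {m : Type*} [Fintype m] {A : Matrix m m ℂ} (hA : A.IsHermitian) :
    0 ≤ (A * A).trace.re := by
  have h := (Matrix.posSemidef_conjTranspose_mul_self A).trace_nonneg
  rw [hA.eq] at h
  exact (Complex.nonneg_iff.1 h).1

variable {ι α : Type*} [Fintype ι] [DecidableEq ι] [Fintype α] [DecidableEq α]
  [MeasurableSpace (Matrix.unitaryGroup (α × α) ℂ)]
  [BorelSpace (Matrix.unitaryGroup (α × α) ℂ)] (μ : Measure (Matrix.unitaryGroup (α × α) ℂ))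

theorem trace_swapFstMatrix_mul_secondMomentTwirl [IsProbabilityMeasure μ] [μ.IsMulLeftInvariant]
    (X : Matrix ((α × α) × (α × α)) ((α × α) × (α × α)) ℂ) :
    (swapFstMatrix α α ℂ * secondMomentTwirl μ X).trace =
      Fintype.card α / ((Fintype.card α : ℂ) ^ 2 + 1) *
        ((swapMatrix (α × α) ℂ * X).trace + X.trace) := by
  obtain ⟨q, r, hqr⟩ := exists_eq_smul_one_add_smul_swapMatrix_of_commute_unitary
    fun _ ↦ commute_secondMomentTwirl μ X
  have htrace : (secondMomentTwirl μ X).trace = X.trace := by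
    simpa using trace_mul_secondMomentTwirl_of_commute μ X fun U _ ↦ Commute.one_left (U ⊗ₖ U)
  rw [trace_swapFstMatrix_mul_of_eq_smul_one_add_smul_swapMatrix hqr, htrace,
    trace_mul_secondMomentTwirl_of_commute μ X fun U _ ↦ commute_swapMatrix_kronecker_self U]

theorem haar_average_ptrace_sq_general [IsProbabilityMeasure μ] [μ.IsMulLeftInvariant]
    (H : Matrix (ι × α × α) (ι × α × α) ℂ) :
    (∫ U : Matrix.unitaryGroup (α × α) ℂ,
        (partialTraceThird ((1 : Matrix ι ι ℂ) ⊗ₖ U.1 * H * ((1 : Matrix ι ι ℂ) ⊗ₖ U.1)ᴴ) *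
          partialTraceThird ((1 : Matrix ι ι ℂ) ⊗ₖ U.1 * H *
            ((1 : Matrix ι ι ℂ) ⊗ₖ U.1)ᴴ)).trace ∂μ) =
      Fintype.card α / ((Fintype.card α : ℂ) ^ 2 + 1) *
        ((H * H).trace + (partialTraceRight H * partialTraceRight H).trace) ∧
    (H.IsHermitian →
      (Fintype.card α / ((Fintype.card α : ℝ) ^ 2 + 1)) * (H * H).trace.re ≤
        ∫ U : Matrix.unitaryGroup (α × α) ℂ,
          (partialTraceThird ((1 : Matrix ι ι ℂ) ⊗ₖ U.1 * H * ((1 : Matrix ι ι ℂ) ⊗ₖ U.1)ᴴ) *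
            partialTraceThird ((1 : Matrix ι ι ℂ) ⊗ₖ U.1 * H *
              ((1 : Matrix ι ι ℂ) ⊗ₖ U.1)ᴴ)).trace.re ∂μ) := by
  simp only [trace_partialTraceThird_conj_mul_self]
  have haverage := trace_swapFstMatrix_mul_secondMomentTwirl μ (swapContraction H)
  rw [trace_mul_secondMomentTwirl, trace_swapMatrix_mul_swapContraction,
    trace_swapContraction] at haverage
  refine ⟨haverage, fun hH ↦ ?_⟩
  have hint : Integrable (fun U : Matrix.unitaryGroup (α × α) ℂ ↦ (swapFstMatrix α α ℂ *
      (U.1 ⊗ₖ U.1 * swapContraction H * (U.1 ⊗ₖ U.1)ᴴ)).trace) μ :=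
    integrable_of_continuous_unitaryGroup μ
      (continuous_const.matrix_mul (continuous_kronecker_self_conj _)).matrix_trace
  have hre := integral_re hint
  simp only [RCLike.re_to_complex] at hre
  have hcoeff : (Fintype.card α : ℂ) / ((Fintype.card α : ℂ) ^ 2 + 1) =
      ((Fintype.card α / ((Fintype.card α : ℝ) ^ 2 + 1) : ℝ) : ℂ) := by push_cast; rfl
  rw [hre, haverage, hcoeff, Complex.re_ofReal_mul, Complex.add_re]
  have hnonneg := re_trace_mul_self_nonneg (isHermitian_partialTraceRight hH)
  gcongr
  exact le_add_of_nonneg_right hnonneg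

end Average

instance borelSpace_matrix (d : ℕ) : BorelSpace (Matrix (Fin d × Fin d) (Fin d × Fin d) ℂ) :=
  inferInstanceAs (BorelSpace (Fin d × Fin d → Fin d × Fin d → ℂ))

theorem haar_average_ptrace_sq (d : ℕ) (hd : 1 ≤ d)
    (μ : Measure (Matrix.unitaryGroup (Fin d × Fin d) ℂ)) [IsProbabilityMeasure μ]
    (hinv : ∀ V : Matrix.unitaryGroup (Fin d × Fin d) ℂ, μ.map (fun U => V * U) = μ)
    (H : Matrix (Fin d × Fin d × Fin d) (Fin d × Fin d × Fin d) ℂ) (hH : H.IsHermitian) :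
    (∫ U : Matrix.unitaryGroup (Fin d × Fin d) ℂ,
        (Matrix.trace
          (ptrace3 (((1 : Matrix (Fin d) (Fin d) ℂ) ⊗ₖ (U : Matrix _ _ ℂ)) * H *
              ((1 : Matrix (Fin d) (Fin d) ℂ) ⊗ₖ (U : Matrix _ _ ℂ))ᴴ) *
            ptrace3 (((1 : Matrix (Fin d) (Fin d) ℂ) ⊗ₖ (U : Matrix _ _ ℂ)) * H *
              ((1 : Matrix (Fin d) (Fin d) ℂ) ⊗ₖ (U : Matrix _ _ ℂ))ᴴ))) ∂μ) =
      ((d : ℂ) / ((d : ℂ) ^ 2 + 1)) *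
        ((H * H).trace + ((ptrace23 H) * (ptrace23 H)).trace) ∧
    (∫ U : Matrix.unitaryGroup (Fin d × Fin d) ℂ,
        (Matrix.trace
          (ptrace3 (((1 : Matrix (Fin d) (Fin d) ℂ) ⊗ₖ (U : Matrix _ _ ℂ)) * H *
              ((1 : Matrix (Fin d) (Fin d) ℂ) ⊗ₖ (U : Matrix _ _ ℂ))ᴴ) *
            ptrace3 (((1 : Matrix (Fin d) (Fin d) ℂ) ⊗ₖ (U : Matrix _ _ ℂ)) * H *
              ((1 : Matrix (Fin d) (Fin d) ℂ) ⊗ₖ (U : Matrix _ _ ℂ))ᴴ))).re ∂μ) ≥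
      ((d : ℝ) / ((d : ℝ) ^ 2 + 1)) * ((H * H).trace).re := by
  have : μ.IsMulLeftInvariant := ⟨hinv⟩
  have h := haar_average_ptrace_sq_general μ H
  rw [Fintype.card_fin] at h
  exact ⟨h.1, h.2 hH⟩
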